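/- Under Assumption 3, assume X2 ∩ X4 and X1 ∩ X3 are nonempty and let z_i = max{w_i : w ∈ X2 ∩ X4} and y_i = min{w_i : w ∈ X1 ∩ X3}. Then the sequence (u^k) converges componentwise, from above and monotonically, to z, and the sequence (l^k) converges componentwise, from below and monotonically, to y; in particular, if u^{k+1} = u^k and l^{k+1} = l^k for some k, then u^k = z and l^k = y. -/

import Mathlib

/-!
Under Assumption 3 the function `ℓ` is continuous and nondecreasing: it equals
`(1 - hγ) w + hP / (M √(max w w̄))`, and for `w ≥ w̄` the slope bound at `w̄` controls the decrease of
the second term (`ell_mono`). Assumption 3 also forces `1 - hγ > 0`.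

Everything else holds for an arbitrary continuous nondecreasing `f` in place of `ℓ`.
Each backward or forward sweep only lowers (for `u`) or raises (for `l`) the vector, and it
never crosses a point of `X2 ∩ X4` (resp. `X1 ∩ X3`): for `u` because `f` is nondecreasing, for `l` by
the minimality in the definition of `B1`. Hence both sequences are
monotone and bounded, so they converge, and the half-steps, squeezed between consecutive iterates,
have the same limits. The half-steps satisfy one of the two families of constraints and the full steps
the other, so by continuity the limit satisfies both (`Feas.of_tendsto`). It is therefore a feasible
vector which bounds all feasible vectors, i.e. `z` (`upper_sweeps`) or `y` (`lower_sweeps`). A fixed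
point of the iteration is treated as the limit of a constant sequence.
-/

open Filter Topology

/-- The function ℓ from the speed-planning problem. -/
noncomputable def ell (h γ g M Pmax μ w : ℝ) : ℝ :=
  if w ≤ (Pmax / (M * g * μ)) ^ 2 then (1 - h * γ) * w + h * g * μ
  else (1 - h * γ) * w + h * Pmax / (M * Real.sqrt w)

/-- Membership in `X1`. -/
def memX1 (n : ℕ) (h γ g M Pmax μ c : ℝ) (α wmin w : ℕ → ℝ) : Prop :=
  (∀ i, 1 ≤ i → i ≤ n → wmin i ≤ w i) ∧
  (∀ j, 1 ≤ j → j ≤ n - 1 →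
    w (j + 1) ≤ ell h γ g M Pmax μ (w j) - h * g * (Real.sin (α j) + c))

/-- Membership in `X2`. -/
def memX2 (n : ℕ) (h γ g M Pmax μ c : ℝ) (α wmax w : ℕ → ℝ) : Prop :=
  (∀ i, 1 ≤ i → i ≤ n → w i ≤ wmax i) ∧
  (∀ j, 1 ≤ j → j ≤ n - 1 →
    w (j + 1) ≤ ell h γ g M Pmax μ (w j) - h * g * (Real.sin (α j) + c))

/-- Membership in `X3`. -/
def memX3 (n : ℕ) (h γ g μ c : ℝ) (α wmin w : ℕ → ℝ) : Prop :=
  (∀ i, 1 ≤ i → i ≤ n → wmin i ≤ w i) ∧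
  (∀ j, 1 ≤ j → j ≤ n - 1 →
    (1 - h * γ) * w j - h * g * (Real.sin (α j) + c + μ) ≤ w (j + 1))

/-- Membership in `X4`. -/
def memX4 (n : ℕ) (h γ g μ c : ℝ) (α wmax w : ℕ → ℝ) : Prop :=
  (∀ i, 1 ≤ i → i ≤ n → w i ≤ wmax i) ∧
  (∀ j, 1 ≤ j → j ≤ n - 1 →
    (1 - h * γ) * w j - h * g * (Real.sin (α j) + c + μ) ≤ w (j + 1))

/-! ### Chains of constraints and their limits -/

/-- The constraints linking consecutive entries `w j`, `w (j + 1)` for `1 ≤ j ≤ n - 1`, with an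
abstract function `f` in the role of `ℓ`, the slope `a` in the role of `1 - hγ`, and offsets `b`, `d`.
Vectors in `ℝⁿ` are encoded as functions on `ℕ` of which only the entries `1, …, n` matter. -/
def Feas (n : ℕ) (f : ℝ → ℝ) (a : ℝ) (b d w : ℕ → ℝ) : Prop :=
  ∀ j, 1 ≤ j → j ≤ n - 1 → w (j + 1) ≤ f (w j) - b j ∧ a * w j - d j ≤ w (j + 1)

theorem forward_induction {P : ℕ → Prop} {n : ℕ} (h1 : P 1)
    (hs : ∀ j, 1 ≤ j → j ≤ n - 1 → P j → P (j + 1)) : ∀ i, 1 ≤ i → i ≤ n → P i := by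
  intro i hi
  induction i, hi using Nat.le_induction with
  | base => exact fun _ => h1
  | succ j hj ih => exact fun hjn => hs j hj (by omega) (ih (by omega))

theorem backward_induction {P : ℕ → Prop} {n : ℕ} (hn : P n)
    (hs : ∀ j, 1 ≤ j → j ≤ n - 1 → P (j + 1) → P j) : ∀ i, 1 ≤ i → i ≤ n → P i := by
  have key : ∀ m, ∀ i, 1 ≤ i → i + m = n → P i := by
    intro m
    induction m with
    | zero => intro i _ h; rw [Nat.add_zero] at h; exact h ▸ hn
    | succ m ih => intro i hi h; exact hs i hi (by omega) (ih (i + 1) (by omega) (by omega))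
  intro i hi hin
  exact key (n - i) i hi (by omega)

/-- If `vh` satisfies the first family of constraints, `v` the second, and both converge to `w`,
then `w` satisfies both. -/
theorem Feas.of_tendsto {n : ℕ} {f : ℝ → ℝ} {a : ℝ} {b d w : ℕ → ℝ} (hfc : Continuous f)
    {v vh : ℕ → ℕ → ℝ}
    (hv : ∀ i, 1 ≤ i → i ≤ n → Tendsto (fun k => v k i) atTop (𝓝 (w i)))
    (hvh : ∀ i, 1 ≤ i → i ≤ n → Tendsto (fun k => vh k i) atTop (𝓝 (w i)))
    (h1 : ∀ k j, 1 ≤ j → j ≤ n - 1 → vh k (j + 1) ≤ f (vh k j) - b j)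
    (h2 : ∀ k j, 1 ≤ j → j ≤ n - 1 → a * v k j - d j ≤ v k (j + 1)) :
    Feas n f a b d w := by
  intro j hj hjn
  have hj' : 1 ≤ j + 1 := by omega
  have hjn' : j + 1 ≤ n := by omega
  have hjn'' : j ≤ n := by omega
  exact ⟨le_of_tendsto_of_tendsto' (hvh _ hj' hjn')
      (((hfc.tendsto _).comp (hvh j hj hjn'')).sub_const _) fun k => h1 k j hj hjn,
    le_of_tendsto_of_tendsto' (((hv j hj hjn'').const_mul a).sub_const _)
      (hv _ hj' hjn') fun k => h2 k j hj hjn⟩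

/-! ### The two monotone iterations -/

/-- The iteration from above: it decreases to the largest feasible vector below `wmax`, and any of its
fixed points is that vector. -/
theorem upper_sweeps {n : ℕ} (hn : 2 ≤ n) {f : ℝ → ℝ} {a : ℝ} {b d : ℕ → ℝ} (hf : Monotone f)
    (hfc : Continuous f) (ha : 0 < a) {wmax z : ℕ → ℝ}
    (hz : ∀ i, 1 ≤ i → i ≤ n →
      ∃ w, (∀ i, 1 ≤ i → i ≤ n → w i ≤ wmax i) ∧ Feas n f a b d w ∧ w i = z i)
    (hz' : ∀ w, (∀ i, 1 ≤ i → i ≤ n → w i ≤ wmax i) → Feas n f a b d w →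
      ∀ i, 1 ≤ i → i ≤ n → w i ≤ z i)
    {u uh : ℕ → ℕ → ℝ} (hu1 : ∀ i, u 1 i = wmax i)
    (huh1 : ∀ k, 1 ≤ k → uh k 1 = u k 1)
    (huhs : ∀ k, 1 ≤ k → ∀ j, 1 ≤ j → j ≤ n - 1 →
      uh k (j + 1) = min (u k (j + 1)) (f (uh k j) - b j))
    (hun : ∀ k, 1 ≤ k → u (k + 1) n = uh k n)
    (hus : ∀ k, 1 ≤ k → ∀ j, 1 ≤ j → j ≤ n - 1 →
      u (k + 1) j = min (uh k j) ((u (k + 1) (j + 1) + d j) / a)) :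
    (∀ k, 1 ≤ k → ∀ i, 1 ≤ i → i ≤ n → u (k + 1) i ≤ u k i ∧ z i ≤ u k i) ∧
    (∀ i, 1 ≤ i → i ≤ n → Tendsto (fun k => u k i) atTop (𝓝 (z i))) ∧
    (∀ k, 1 ≤ k → (∀ i, 1 ≤ i → i ≤ n → u (k + 1) i = u k i) →
      ∀ i, 1 ≤ i → i ≤ n → u k i = z i) := by
  have hle1 : ∀ k, 1 ≤ k → ∀ i, 1 ≤ i → i ≤ n → uh k i ≤ u k i := by
    intro k hk
    refine forward_induction (huh1 k hk).le fun j hj hjn _ => ?_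
    rw [huhs k hk j hj hjn]
    exact min_le_left _ _
  have hle2 : ∀ k, 1 ≤ k → ∀ i, 1 ≤ i → i ≤ n → u (k + 1) i ≤ uh k i := by
    intro k hk
    refine backward_induction (hun k hk).le fun j hj hjn _ => ?_
    rw [hus k hk j hj hjn]
    exact min_le_left _ _
  have hanti : ∀ k, 1 ≤ k → ∀ i, 1 ≤ i → i ≤ n → u (k + 1) i ≤ u k i :=
    fun k hk i hi hin => (hle2 k hk i hi hin).trans (hle1 k hk i hi hin)
  have hc1 : ∀ k, 1 ≤ k → ∀ j, 1 ≤ j → j ≤ n - 1 → uh k (j + 1) ≤ f (uh k j) - b j := by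
    intro k hk j hj hjn
    rw [huhs k hk j hj hjn]
    exact min_le_right _ _
  have hc2 : ∀ k, 1 ≤ k → ∀ j, 1 ≤ j → j ≤ n - 1 →
      a * u (k + 1) j - d j ≤ u (k + 1) (j + 1) := by
    intro k hk j hj hjn
    have h := (hus k hk j hj hjn).le.trans (min_le_right _ _)
    rw [le_div_iff₀' ha] at h
    linarith
  have hbelow : ∀ w, (∀ i, 1 ≤ i → i ≤ n → w i ≤ wmax i) → Feas n f a b d w →
      ∀ k, 1 ≤ k → ∀ i, 1 ≤ i → i ≤ n → w i ≤ u k i := by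
    intro w hw hF k hk
    induction k, hk using Nat.le_induction with
    | base => intro i hi hin; rw [hu1]; exact hw i hi hin
    | succ k hk ih =>
      have hhalf : ∀ i, 1 ≤ i → i ≤ n → w i ≤ uh k i := by
        refine forward_induction ?_ fun j hj hjn hP => ?_
        · rw [huh1 k hk]; exact ih 1 le_rfl (by omega)
        · rw [huhs k hk j hj hjn]
          exact le_min (ih _ (by omega) (by omega))
            ((hF j hj hjn).1.trans (sub_le_sub_right (hf hP) _))
      refine backward_induction ?_ fun j hj hjn hP => ?_
      · rw [hun k hk]; exact hhalf n (by omega) le_rfl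
      · rw [hus k hk j hj hjn]
        refine le_min (hhalf _ hj (by omega)) ?_
        rw [le_div_iff₀' ha]
        linarith [(hF j hj hjn).2]
  have hzu : ∀ k, 1 ≤ k → ∀ i, 1 ≤ i → i ≤ n → z i ≤ u k i := by
    intro k hk i hi hin
    obtain ⟨w, hw, hF, hwz⟩ := hz i hi hin
    exact hwz ▸ hbelow w hw hF k hk i hi hin
  have hmax : ∀ k, 1 ≤ k → ∀ i, 1 ≤ i → i ≤ n → u k i ≤ wmax i := by
    intro k hk
    induction k, hk using Nat.le_induction with
    | base => intro i _ _; exact (hu1 i).le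
    | succ k hk ih => intro i hi hin; exact (hanti k hk i hi hin).trans (ih i hi hin)
  refine ⟨fun k hk i hi hin => ⟨hanti k hk i hi hin, hzu k hk i hi hin⟩, ?_, ?_⟩
  · have hex : ∀ i, ∃ L, 1 ≤ i → i ≤ n → Tendsto (fun k => u (k + 1) i) atTop (𝓝 L) := by
      intro i
      by_cases hi : 1 ≤ i ∧ i ≤ n
      · refine ⟨_, fun _ _ => tendsto_atTop_ciInf
          (antitone_nat_of_succ_le fun k => hanti (k + 1) (by omega) i hi.1 hi.2) ⟨z i, ?_⟩⟩
        rintro _ ⟨k, rfl⟩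
        exact hzu (k + 1) (by omega) i hi.1 hi.2
      · exact ⟨0, fun h1 h2 => absurd ⟨h1, h2⟩ hi⟩
    choose L hL using hex
    have hL2 : ∀ i, 1 ≤ i → i ≤ n → Tendsto (fun k => u (k + 1 + 1) i) atTop (𝓝 (L i)) :=
      fun i hi hin => (tendsto_add_atTop_iff_nat (f := fun k => u (k + 1) i) 1).2 (hL i hi hin)
    have hLh : ∀ i, 1 ≤ i → i ≤ n → Tendsto (fun k => uh (k + 1) i) atTop (𝓝 (L i)) :=
      fun i hi hin => tendsto_of_tendsto_of_tendsto_of_le_of_le (hL2 i hi hin) (hL i hi hin)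
        (fun k => hle2 (k + 1) (by omega) i hi hin) (fun k => hle1 (k + 1) (by omega) i hi hin)
    have hF : Feas n f a b d L := Feas.of_tendsto hfc hL2 hLh
      (fun k => hc1 (k + 1) (by omega)) (fun k => hc2 (k + 1) (by omega))
    have hLmax : ∀ i, 1 ≤ i → i ≤ n → L i ≤ wmax i := fun i hi hin =>
      le_of_tendsto' (hL i hi hin) fun k => hmax (k + 1) (by omega) i hi hin
    intro i hi hin
    have hLz : L i = z i := le_antisymm (hz' L hLmax hF i hi hin)
      (ge_of_tendsto' (hL i hi hin) fun k => hzu (k + 1) (by omega) i hi hin)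
    exact (tendsto_add_atTop_iff_nat 1).1 (hLz ▸ hL i hi hin)
  · intro k hk hfix
    have hF : Feas n f a b d (u k) := by
      refine Feas.of_tendsto (v := fun _ => u (k + 1)) (vh := fun _ => uh k) hfc
        (fun i hi hin => ?_) (fun i hi hin => ?_) (fun _ => hc1 k hk) (fun _ => hc2 k hk)
      · rw [hfix i hi hin]; exact tendsto_const_nhds
      · have : uh k i = u k i := le_antisymm (hle1 k hk i hi hin)
          (hfix i hi hin ▸ hle2 k hk i hi hin)
        rw [this]; exact tendsto_const_nhds
    exact fun i hi hin => le_antisymm (hz' _ (hmax k hk) hF i hi hin) (hzu k hk i hi hin)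

/-- The iteration from below: it increases to the smallest feasible vector above `wmin`, and any of its
fixed points is that vector. -/
theorem lower_sweeps {n : ℕ} (hn : 2 ≤ n) {f : ℝ → ℝ} {a : ℝ} {b d : ℕ → ℝ}
    (hfc : Continuous f) (ha : 0 < a) {wmin y : ℕ → ℝ}
    (hy : ∀ i, 1 ≤ i → i ≤ n →
      ∃ w, (∀ i, 1 ≤ i → i ≤ n → wmin i ≤ w i) ∧ Feas n f a b d w ∧ w i = y i)
    (hy' : ∀ w, (∀ i, 1 ≤ i → i ≤ n → wmin i ≤ w i) → Feas n f a b d w →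
      ∀ i, 1 ≤ i → i ≤ n → y i ≤ w i)
    {l lh : ℕ → ℕ → ℝ} (hl1 : ∀ i, l 1 i = wmin i)
    (hlhn : ∀ k, 1 ≤ k → lh k n = l k n)
    (hlhs : ∀ k, 1 ≤ k → ∀ j, 1 ≤ j → j ≤ n - 1 →
      IsLeast {x : ℝ | l k j ≤ x ∧ lh k (j + 1) + b j ≤ f x} (lh k j))
    (hls1 : ∀ k, 1 ≤ k → l (k + 1) 1 = lh k 1)
    (hlss : ∀ k, 1 ≤ k → ∀ j, 1 ≤ j → j ≤ n - 1 →
      l (k + 1) (j + 1) = max (lh k (j + 1)) (a * l (k + 1) j - d j)) :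
    (∀ k, 1 ≤ k → ∀ i, 1 ≤ i → i ≤ n → l k i ≤ l (k + 1) i ∧ l k i ≤ y i) ∧
    (∀ i, 1 ≤ i → i ≤ n → Tendsto (fun k => l k i) atTop (𝓝 (y i))) ∧
    (∀ k, 1 ≤ k → (∀ i, 1 ≤ i → i ≤ n → l (k + 1) i = l k i) →
      ∀ i, 1 ≤ i → i ≤ n → l k i = y i) := by
  have hle1 : ∀ k, 1 ≤ k → ∀ i, 1 ≤ i → i ≤ n → l k i ≤ lh k i := by
    intro k hk
    exact backward_induction (hlhn k hk).ge fun j hj hjn _ => (hlhs k hk j hj hjn).1.1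
  have hle2 : ∀ k, 1 ≤ k → ∀ i, 1 ≤ i → i ≤ n → lh k i ≤ l (k + 1) i := by
    intro k hk
    refine forward_induction (hls1 k hk).ge fun j hj hjn _ => ?_
    rw [hlss k hk j hj hjn]
    exact le_max_left _ _
  have hmono : ∀ k, 1 ≤ k → ∀ i, 1 ≤ i → i ≤ n → l k i ≤ l (k + 1) i :=
    fun k hk i hi hin => (hle1 k hk i hi hin).trans (hle2 k hk i hi hin)
  have hc1 : ∀ k, 1 ≤ k → ∀ j, 1 ≤ j → j ≤ n - 1 → lh k (j + 1) ≤ f (lh k j) - b j :=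
    fun k hk j hj hjn => le_sub_iff_add_le.2 (hlhs k hk j hj hjn).1.2
  have hc2 : ∀ k, 1 ≤ k → ∀ j, 1 ≤ j → j ≤ n - 1 →
      a * l (k + 1) j - d j ≤ l (k + 1) (j + 1) := by
    intro k hk j hj hjn
    rw [hlss k hk j hj hjn]
    exact le_max_right _ _
  have habove : ∀ w, (∀ i, 1 ≤ i → i ≤ n → wmin i ≤ w i) → Feas n f a b d w →
      ∀ k, 1 ≤ k → ∀ i, 1 ≤ i → i ≤ n → l k i ≤ w i := by
    intro w hw hF k hk
    induction k, hk using Nat.le_induction with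
    | base => intro i hi hin; rw [hl1]; exact hw i hi hin
    | succ k hk ih =>
      have hhalf : ∀ i, 1 ≤ i → i ≤ n → lh k i ≤ w i := by
        refine backward_induction ?_ fun j hj hjn hP => ?_
        · rw [hlhn k hk]; exact ih n (by omega) le_rfl
        · exact (hlhs k hk j hj hjn).2
            ⟨ih j hj (by omega), by linarith [(hF j hj hjn).1]⟩
      refine forward_induction ?_ fun j hj hjn hP => ?_
      · rw [hls1 k hk]; exact hhalf 1 le_rfl (by omega)
      · rw [hlss k hk j hj hjn]
        exact max_le (hhalf _ (by omega) (by omega))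
          ((sub_le_sub_right (mul_le_mul_of_nonneg_left hP ha.le) _).trans (hF j hj hjn).2)
  have hly : ∀ k, 1 ≤ k → ∀ i, 1 ≤ i → i ≤ n → l k i ≤ y i := by
    intro k hk i hi hin
    obtain ⟨w, hw, hF, hwy⟩ := hy i hi hin
    exact hwy ▸ habove w hw hF k hk i hi hin
  have hmin : ∀ k, 1 ≤ k → ∀ i, 1 ≤ i → i ≤ n → wmin i ≤ l k i := by
    intro k hk
    induction k, hk using Nat.le_induction with
    | base => intro i _ _; exact (hl1 i).ge
    | succ k hk ih => intro i hi hin; exact (ih i hi hin).trans (hmono k hk i hi hin)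
  refine ⟨fun k hk i hi hin => ⟨hmono k hk i hi hin, hly k hk i hi hin⟩, ?_, ?_⟩
  · have hex : ∀ i, ∃ L, 1 ≤ i → i ≤ n → Tendsto (fun k => l (k + 1) i) atTop (𝓝 L) := by
      intro i
      by_cases hi : 1 ≤ i ∧ i ≤ n
      · refine ⟨_, fun _ _ => tendsto_atTop_ciSup
          (monotone_nat_of_le_succ fun k => hmono (k + 1) (by omega) i hi.1 hi.2) ⟨y i, ?_⟩⟩
        rintro _ ⟨k, rfl⟩
        exact hly (k + 1) (by omega) i hi.1 hi.2
      · exact ⟨0, fun h1 h2 => absurd ⟨h1, h2⟩ hi⟩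
    choose L hL using hex
    have hL2 : ∀ i, 1 ≤ i → i ≤ n → Tendsto (fun k => l (k + 1 + 1) i) atTop (𝓝 (L i)) :=
      fun i hi hin => (tendsto_add_atTop_iff_nat (f := fun k => l (k + 1) i) 1).2 (hL i hi hin)
    have hLh : ∀ i, 1 ≤ i → i ≤ n → Tendsto (fun k => lh (k + 1) i) atTop (𝓝 (L i)) :=
      fun i hi hin => tendsto_of_tendsto_of_tendsto_of_le_of_le (hL i hi hin) (hL2 i hi hin)
        (fun k => hle1 (k + 1) (by omega) i hi hin) (fun k => hle2 (k + 1) (by omega) i hi hin)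
    have hF : Feas n f a b d L := Feas.of_tendsto hfc hL2 hLh
      (fun k => hc1 (k + 1) (by omega)) (fun k => hc2 (k + 1) (by omega))
    have hLmin : ∀ i, 1 ≤ i → i ≤ n → wmin i ≤ L i := fun i hi hin =>
      ge_of_tendsto' (hL i hi hin) fun k => hmin (k + 1) (by omega) i hi hin
    intro i hi hin
    have hLy : L i = y i := le_antisymm
      (le_of_tendsto' (hL i hi hin) fun k => hly (k + 1) (by omega) i hi hin)
      (hy' L hLmin hF i hi hin)
    exact (tendsto_add_atTop_iff_nat 1).1 (hLy ▸ hL i hi hin)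
  · intro k hk hfix
    have hF : Feas n f a b d (l k) := by
      refine Feas.of_tendsto (v := fun _ => l (k + 1)) (vh := fun _ => lh k) hfc
        (fun i hi hin => ?_) (fun i hi hin => ?_) (fun _ => hc1 k hk) (fun _ => hc2 k hk)
      · rw [hfix i hi hin]; exact tendsto_const_nhds
      · have : lh k i = l k i := le_antisymm (hfix i hi hin ▸ hle2 k hk i hi hin)
          (hle1 k hk i hi hin)
        rw [this]; exact tendsto_const_nhds
    exact fun i hi hin => le_antisymm (hly k hk i hi hin) (hy' _ (hmin k hk) hF i hi hin)

/-! ### Continuity and monotonicity of `ℓ` under Assumption 3 -/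

/-- A single formula for `ℓ`: the two branches agree at the critical speed `w̄`, where
`√w̄ = P / (M g μ)`. -/
theorem ell_eq {h γ g M Pmax μ : ℝ} (hg : 0 < g) (hM : 0 < M) (hP : 0 < Pmax) (hμ : 0 < μ) (w : ℝ) :
    ell h γ g M Pmax μ w =
      (1 - h * γ) * w + h * Pmax / (M * √(max w ((Pmax / (M * g * μ)) ^ 2))) := by
  unfold ell
  split_ifs with hw
  · rw [max_eq_right hw, Real.sqrt_sq (by positivity)]
    field_simp
  · rw [max_eq_left (not_le.1 hw).le]

theorem ell_continuous {h γ g M Pmax μ : ℝ} (hg : 0 < g) (hM : 0 < M) (hP : 0 < Pmax)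
    (hμ : 0 < μ) : Continuous (ell h γ g M Pmax μ) := by
  rw [funext (ell_eq (h := h) (γ := γ) hg hM hP hμ)]
  have hpos : ∀ w : ℝ, M * √(max w ((Pmax / (M * g * μ)) ^ 2)) ≠ 0 := fun w => by
    have : 0 < max w ((Pmax / (M * g * μ)) ^ 2) := lt_max_of_lt_right (by positivity)
    positivity
  exact (continuous_const.mul continuous_id).add
    (continuous_const.div (by fun_prop) hpos)

/-- Beyond `w̄` the second term of `ell_eq` decreases, with steepest slope at `w̄` itself; `hA3` says
that `1 - hγ` dominates that slope. -/
theorem ell_mono {h γ g M Pmax μ : ℝ} (hh : 0 < h) (hg : 0 < g) (hM : 0 < M) (hP : 0 < Pmax)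
    (hμ : 0 < μ) (ha : 0 < 1 - h * γ)
    (hA3 : h * Pmax / (2 * M * (Pmax / (M * g * μ)) ^ 3) ≤ 1 - h * γ) :
    Monotone (ell h γ g M Pmax μ) := by
  intro x y hxy
  rw [ell_eq hg hM hP hμ, ell_eq hg hM hP hμ]
  have hr : 0 < Pmax / (M * g * μ) := by positivity
  set r := Pmax / (M * g * μ)
  set a := 1 - h * γ
  -- `s ≤ t` are the square roots of `x` and `y` truncated from below at `w̄ = r²`.
  set s := √(max x (r ^ 2)) with hs
  set t := √(max y (r ^ 2)) with ht
  have hrs : r ≤ s := Real.le_sqrt_of_sq_le (le_max_right _ _)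
  have hst : s ≤ t := Real.sqrt_le_sqrt (max_le_max_right _ hxy)
  have hs2 : s ^ 2 = max x (r ^ 2) := Real.sq_sqrt (le_max_of_le_right (by positivity))
  have ht2 : t ^ 2 = max y (r ^ 2) := Real.sq_sqrt (le_max_of_le_right (by positivity))
  have hs0 : 0 < s := hr.trans_le hrs
  have ht0 : 0 < t := hs0.trans_le hst
  -- Truncation at `w̄` is nonexpansive, so it suffices to compare the truncated values.
  have htr : t ^ 2 - s ^ 2 ≤ y - x := by
    rw [hs2, ht2]
    rcases le_total x (r ^ 2) with hx | hx <;> rcases le_total y (r ^ 2) with hy | hy <;>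
      simp only [max_eq_left, max_eq_right, hx, hy] <;> linarith
  have hdiff : h * Pmax / (M * s) - h * Pmax / (M * t) = h * Pmax / (M * (s * t)) * (t - s) := by
    field_simp
  have hcoef : h * Pmax / (M * (s * t)) ≤ a * (t + s) := by
    have hrr : r * r ≤ s * t := mul_le_mul hrs (hrs.trans hst) hr.le hs0.le
    calc h * Pmax / (M * (s * t)) ≤ h * Pmax / (M * (r * r)) := by gcongr
      _ = h * Pmax / (2 * M * r ^ 3) * (2 * r) := by field_simp
      _ ≤ a * (t + s) := mul_le_mul hA3 (by linarith) (by positivity) ha.le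
  have h1 := mul_le_mul_of_nonneg_right hcoef (sub_nonneg.2 hst)
  have h2 := mul_le_mul_of_nonneg_left htr ha.le
  linarith [h1, h2, hdiff, (by ring : a * (t + s) * (t - s) = a * (t ^ 2 - s ^ 2))]

/-! ### Convergence of the algorithm -/

theorem algorithm_converges_to_z_y (n : ℕ) (hn : 2 ≤ n)
    (h γ g M Pmax μ c winit wfin : ℝ)
    (hh : 0 < h) (hg : 0 < g) (hM : 0 < M) (hP : 0 < Pmax) (hμ : 0 < μ)
    (hγ : 0 ≤ γ) (hc : 0 ≤ c) (hwinit : 0 ≤ winit) (hwfin : 0 ≤ wfin)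
    (hA3 : 0 ≤ 1 - h * γ - h * Pmax / (2 * M * ((Pmax / (M * g * μ)) ^ 2) ^ ((3:ℝ)/2)))
    (α wmin wmax : ℕ → ℝ)
    (hwmaxpos : ∀ i, 1 ≤ i → i ≤ n → 0 ≤ wmax i)
    (hwmax1 : wmax 1 = winit) (hwmaxn : wmax n = wfin)
    (hwmin1 : wmin 1 = winit) (hwminn : wmin n = wfin)
    (hwminmid : ∀ i, 2 ≤ i → i ≤ n - 1 → wmin i = 0)
    -- `z` and `y`: componentwise maximum over `X2 ∩ X4` and minimum over `X1 ∩ X3`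
    (z y : ℕ → ℝ)
    (hz : ∀ i, 1 ≤ i → i ≤ n →
      IsGreatest {x : ℝ | ∃ w : ℕ → ℝ,
        (memX2 n h γ g M Pmax μ c α wmax w ∧ memX4 n h γ g μ c α wmax w) ∧ w i = x}
        (z i))
    (hy : ∀ i, 1 ≤ i → i ≤ n →
      IsLeast {x : ℝ | ∃ w : ℕ → ℝ,
        (memX1 n h γ g M Pmax μ c α wmin w ∧ memX3 n h γ g μ c α wmin w) ∧ w i = x}
        (y i))
    -- the sequences `u^k`, `u^{k+1/2}`, `l^k`, `l^{k+1/2}` of Algorithm 1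
    (u uh l lh : ℕ → ℕ → ℝ)
    (hu1 : ∀ i, u 1 i = wmax i)
    (hl1 : ∀ i, l 1 i = wmin i)
    -- `u^{k+1/2} = B2(u^k)`
    (huh1 : ∀ k, 1 ≤ k → uh k 1 = u k 1)
    (huhs : ∀ k, 1 ≤ k → ∀ j, 1 ≤ j → j ≤ n - 1 →
      uh k (j + 1) = min (u k (j + 1))
        (ell h γ g M Pmax μ (uh k j) - h * g * (Real.sin (α j) + c)))
    -- `u^{k+1} = B4(u^{k+1/2})`
    (hun : ∀ k, 1 ≤ k → u (k + 1) n = uh k n)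
    (hus : ∀ k, 1 ≤ k → ∀ j, 1 ≤ j → j ≤ n - 1 →
      u (k + 1) j = min (uh k j)
        ((u (k + 1) (j + 1) + h * g * (Real.sin (α j) + c + μ)) / (1 - h * γ)))
    -- `l^{k+1/2} = B1(l^k)`
    (hlhn : ∀ k, 1 ≤ k → lh k n = l k n)
    (hlhs : ∀ k, 1 ≤ k → ∀ j, 1 ≤ j → j ≤ n - 1 →
      IsLeast {x : ℝ | l k j ≤ x ∧
        lh k (j + 1) + h * g * (Real.sin (α j) + c) ≤ ell h γ g M Pmax μ x} (lh k j))
    -- `l^{k+1} = B3(l^{k+1/2})`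
    (hls1 : ∀ k, 1 ≤ k → l (k + 1) 1 = lh k 1)
    (hlss : ∀ k, 1 ≤ k → ∀ j, 1 ≤ j → j ≤ n - 1 →
      l (k + 1) (j + 1) = max (lh k (j + 1))
        ((1 - h * γ) * l (k + 1) j - h * g * (Real.sin (α j) + c + μ))) :
    (∀ k, 1 ≤ k → ∀ i, 1 ≤ i → i ≤ n → u (k + 1) i ≤ u k i ∧ z i ≤ u k i ∧ l k i ≤ l (k + 1) i ∧ l k i ≤ y i) ∧
    (∀ i, 1 ≤ i → i ≤ n →
      Tendsto (fun k => u k i) atTop (𝓝 (z i)) ∧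
      Tendsto (fun k => l k i) atTop (𝓝 (y i))) ∧
    (∀ k, 1 ≤ k →
      ((∀ i, 1 ≤ i → i ≤ n → u (k + 1) i = u k i) ∧
        (∀ i, 1 ≤ i → i ≤ n → l (k + 1) i = l k i)) →
      ∀ i, 1 ≤ i → i ≤ n → u k i = z i ∧ l k i = y i) := by
  have hr : 0 < Pmax / (M * g * μ) := by positivity
  have hpow : ((Pmax / (M * g * μ)) ^ 2) ^ ((3 : ℝ) / 2) = (Pmax / (M * g * μ)) ^ 3 := by
    rw [← Real.rpow_natCast, ← Real.rpow_mul hr.le, ← Real.rpow_natCast]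
    norm_num
  rw [hpow] at hA3
  have hslope : 0 < h * Pmax / (2 * M * (Pmax / (M * g * μ)) ^ 3) := by positivity
  have ha : 0 < 1 - h * γ := by linarith
  have hf := ell_mono hh hg hM hP hμ ha (by linarith)
  have hfc := ell_continuous (h := h) (γ := γ) hg hM hP hμ
  obtain ⟨U1, U2, U3⟩ := upper_sweeps hn hf hfc ha
    (b := fun j => h * g * (Real.sin (α j) + c)) (d := fun j => h * g * (Real.sin (α j) + c + μ))
    (fun i hi hin => by
      obtain ⟨w, ⟨h2, h4⟩, hw⟩ := (hz i hi hin).1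
      exact ⟨w, h2.1, fun j hj hjn => ⟨h2.2 j hj hjn, h4.2 j hj hjn⟩, hw⟩)
    (fun w hw hF i hi hin => (hz i hi hin).2
      ⟨w, ⟨⟨hw, fun j hj hjn => (hF j hj hjn).1⟩, hw, fun j hj hjn => (hF j hj hjn).2⟩, rfl⟩)
    hu1 huh1 huhs hun hus
  obtain ⟨L1, L2, L3⟩ := lower_sweeps hn hfc ha
    (b := fun j => h * g * (Real.sin (α j) + c)) (d := fun j => h * g * (Real.sin (α j) + c + μ))
    (fun i hi hin => by
      obtain ⟨w, ⟨h1, h3⟩, hw⟩ := (hy i hi hin).1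
      exact ⟨w, h1.1, fun j hj hjn => ⟨h1.2 j hj hjn, h3.2 j hj hjn⟩, hw⟩)
    (fun w hw hF i hi hin => (hy i hi hin).2
      ⟨w, ⟨⟨hw, fun j hj hjn => (hF j hj hjn).1⟩, hw, fun j hj hjn => (hF j hj hjn).2⟩, rfl⟩)
    hl1 hlhn hlhs hls1 hlss
  exact ⟨fun k hk i hi hin => ⟨(U1 k hk i hi hin).1, (U1 k hk i hi hin).2,
      (L1 k hk i hi hin).1, (L1 k hk i hi hin).2⟩,
    fun i hi hin => ⟨U2 i hi hin, L2 i hi hin⟩,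
    fun k hk hfix i hi hin => ⟨U3 k hk hfix.1 i hi hin, L3 k hk hfix.2 i hi hin⟩⟩
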